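/- arXiv:solv-int/9702006 — 3 statements merged into one kernel-verified Lean document; each statement's English description precedes it below -/
import Mathlib

section
/- In Nijenhuis coordinates, the Hamiltonian of the three-degrees-of-freedom Hénon–Heiles type system takes the separated form: for all (λ1,λ2,λ3,μ1,μ2,μ3) with λ1,λ2,λ3 pairwise distinct and λ1 λ2 λ3 > 0, if (q,p) is given by the transformation Φ below, then H1(q,p) = λ1(16 μ1² − λ1⁵)/(8 λ12 λ13) + λ2(16 μ2² − λ2⁵)/(8 λ21 λ23) + λ3(16 μ3² − λ3⁵)/(8 λ31 λ32), where λij := λi − λj. -/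
/- STATEMENT 5: in Nijenhuis coordinates the 3-dof Hénon–Heiles Hamiltonian takes
the separated form H1 = Σ λi(16 μi² − λi⁵)/(8 Δi). -/

theorem henon_heiles_3dof_separated_form
    (l1 l2 l3 m1 m2 m3 : ℝ)
    (h12 : l1 ≠ l2) (h13 : l1 ≠ l3) (h23 : l2 ≠ l3)
    (hpos : 0 < l1 * l2 * l3)
    (q1 q2 q3 p1 p2 p3 : ℝ)
    (hq1 : q1 = -(1/2) * (l1 + l2 + l3))
    (hq2 : q2 = -(1/8) * (l1 + l2 + l3)^2 + (1/2) * (l1*l2 + l1*l3 + l2*l3))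
    (hq3 : q3 = Real.sqrt (l1 * l2 * l3))
    (hp1 : p1 = l1 * m1 * (-l1 + l2 + l3) / ((l1 - l2) * (l1 - l3))
              + l2 * m2 * (l1 - l2 + l3) / ((l2 - l1) * (l2 - l3))
              + l3 * m3 * (l1 + l2 - l3) / ((l3 - l1) * (l3 - l2)))
    (hp2 : p2 = -2 * (l1 * m1 / ((l1 - l2) * (l1 - l3))
              + l2 * m2 / ((l2 - l1) * (l2 - l3))
              + l3 * m3 / ((l3 - l1) * (l3 - l2))))
    (hp3 : p3 = 2 * Real.sqrt (l1 * l2 * l3) *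
                (m1 / ((l1 - l2) * (l1 - l3))
               + m2 / ((l2 - l1) * (l2 - l3))
               + m3 / ((l3 - l1) * (l3 - l2)))) :
    (1/2) * (2 * p1 * p2 + p3^2) - (5/8) * q1^4 + (5/2) * q1^2 * q2
      + (1/2) * q1 * q3^2 - (1/2) * q2^2 =
    l1 * (16 * m1^2 - l1^5) / (8 * (l1 - l2) * (l1 - l3))
      + l2 * (16 * m2^2 - l2^5) / (8 * (l2 - l1) * (l2 - l3))
      + l3 * (16 * m3^2 - l3^5) / (8 * (l3 - l1) * (l3 - l2)) := by
  have hs : Real.sqrt (l1 * l2 * l3) ^ 2 = l1 * l2 * l3 := Real.sq_sqrt hpos.le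
  have a : l1 - l2 ≠ 0 := sub_ne_zero.2 h12
  have b : l1 - l3 ≠ 0 := sub_ne_zero.2 h13
  have c : l2 - l3 ≠ 0 := sub_ne_zero.2 h23
  have a' : l2 - l1 ≠ 0 := sub_ne_zero.2 h12.symm
  have b' : l3 - l1 ≠ 0 := sub_ne_zero.2 h13.symm
  have c' : l3 - l2 ≠ 0 := sub_ne_zero.2 h23.symm
  -- potential part
  have hV : l1 ^ 6 / ((l1 - l2) * (l1 - l3)) + l2 ^ 6 / ((l2 - l1) * (l2 - l3))
      + l3 ^ 6 / ((l3 - l1) * (l3 - l2))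
      = (l1 + l2 + l3) ^ 4 - 3 * (l1 + l2 + l3) ^ 2 * (l1*l2 + l1*l3 + l2*l3)
        + (l1*l2 + l1*l3 + l2*l3) ^ 2 + 2 * (l1 + l2 + l3) * (l1 * l2 * l3) := by
    rw [← neg_sub l1 l2, ← neg_sub l1 l3, ← neg_sub l2 l3]
    field_simp
    ring
  -- kinetic part, with `m i = a i * Δ i`
  obtain ⟨x, hx⟩ : ∃ x, x = m1 / ((l1 - l2) * (l1 - l3)) := ⟨_, rfl⟩
  obtain ⟨y, hy⟩ : ∃ y, y = m2 / ((l2 - l1) * (l2 - l3)) := ⟨_, rfl⟩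
  obtain ⟨z, hz⟩ : ∃ z, z = m3 / ((l3 - l1) * (l3 - l2)) := ⟨_, rfl⟩
  have e1 : m1 = x * ((l1 - l2) * (l1 - l3)) := by rw [hx]; field_simp
  have e2 : m2 = y * ((l2 - l1) * (l2 - l3)) := by rw [hy]; field_simp
  have e3 : m3 = z * ((l3 - l1) * (l3 - l2)) := by rw [hz]; field_simp
  have hp1' : p1 = l1 * x * (-l1 + l2 + l3) + l2 * y * (l1 - l2 + l3)
      + l3 * z * (l1 + l2 - l3) := by rw [hp1, hx, hy, hz]; ring
  have hp2' : p2 = -2 * (l1 * x + l2 * y + l3 * z) := by rw [hp2, hx, hy, hz]; ring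
  have hp3' : p3 ^ 2 = 4 * (l1 * l2 * l3) * (x + y + z) ^ 2 := by
    rw [hp3, ← hx, ← hy, ← hz, mul_pow, mul_pow, hs]; ring
  have hq3' : q3 ^ 2 = l1 * l2 * l3 := by rw [hq3, hs]
  have hR : l1 * (16 * m1^2 - l1^5) / (8 * (l1 - l2) * (l1 - l3))
      + l2 * (16 * m2^2 - l2^5) / (8 * (l2 - l1) * (l2 - l3))
      + l3 * (16 * m3^2 - l3^5) / (8 * (l3 - l1) * (l3 - l2))
      = 2 * (l1 * m1 * x + l2 * m2 * y + l3 * m3 * z)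
        - (1/8) * (l1 ^ 6 / ((l1 - l2) * (l1 - l3)) + l2 ^ 6 / ((l2 - l1) * (l2 - l3))
      + l3 ^ 6 / ((l3 - l1) * (l3 - l2))) := by
    rw [hx, hy, hz, mul_assoc 8, mul_assoc 8, mul_assoc 8]
    simp only [div_eq_mul_inv, mul_inv]
    ring
  rw [hR, hV, hp3', hq3', hp1', hp2', hq1, hq2, e1, e2, e3]
  ring
end

section
/- The transformation Φ from Nijenhuis coordinates to the original coordinates of the three-degrees-of-freedom Hénon–Heiles type system is canonical: on the open set where λ1,λ2,λ3 are pairwise distinct and λ1 λ2 λ3 > 0, the Jacobian matrix DΦ of Φ satisfies (DΦ)ᵀ J (DΦ) = J pointwise, where J = [[0, I],[−I, 0]] is the canonical symplectic 6×6 matrix (I the 3×3 identity), the coordinates being ordered as (λ1,λ2,λ3;μ1,μ2,μ3) in the source and (q1,q2,q3;p1,p2,p3) in the target. -/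
/- STATEMENT 6: the transformation Φ from Nijenhuis coordinates (λ;μ) to (q;p)
of the 3-dof Hénon–Heiles type system is canonical: (DΦ)ᵀ J (DΦ) = J on the open
set where λ1,λ2,λ3 are pairwise distinct and λ1 λ2 λ3 > 0. -/

noncomputable section

open Matrix

/-- the canonical symplectic matrix `J = [[0, I],[−I, 0]]`. -/
def Jcan : Matrix (Fin 6) (Fin 6) ℝ :=
  !![0, 0, 0, 1, 0, 0;
     0, 0, 0, 0, 1, 0;
     0, 0, 0, 0, 0, 1;
     -1, 0, 0, 0, 0, 0;
     0, -1, 0, 0, 0, 0;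
     0, 0, -1, 0, 0, 0]

/-- the map `Φ : (λ1,λ2,λ3;μ1,μ2,μ3) ↦ (q1,q2,q3;p1,p2,p3)`. -/
def Phi (y : Fin 6 → ℝ) : Fin 6 → ℝ :=
  let l1 := y 0; let l2 := y 1; let l3 := y 2
  let m1 := y 3; let m2 := y 4; let m3 := y 5
  ![-(1/2) * (l1 + l2 + l3),
    -(1/8) * (l1 + l2 + l3)^2 + (1/2) * (l1*l2 + l1*l3 + l2*l3),
    Real.sqrt (l1 * l2 * l3),
    l1 * m1 * (-l1 + l2 + l3) / ((l1 - l2) * (l1 - l3))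
      + l2 * m2 * (l1 - l2 + l3) / ((l2 - l1) * (l2 - l3))
      + l3 * m3 * (l1 + l2 - l3) / ((l3 - l1) * (l3 - l2)),
    -2 * (l1 * m1 / ((l1 - l2) * (l1 - l3))
      + l2 * m2 / ((l2 - l1) * (l2 - l3))
      + l3 * m3 / ((l3 - l1) * (l3 - l2))),
    2 * Real.sqrt (l1 * l2 * l3) *
      (m1 / ((l1 - l2) * (l1 - l3))
       + m2 / ((l2 - l1) * (l2 - l3))
       + m3 / ((l3 - l1) * (l3 - l2)))]

/-- the Jacobian matrix of `Φ` at `y`. -/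
def JacPhi (y : Fin 6 → ℝ) : Matrix (Fin 6) (Fin 6) ℝ :=
  Matrix.of fun i j => fderiv ℝ (fun z => Phi z i) y (Pi.single j 1)

/-- Differentiability of the components of `Phi`, plus a curve-derivative, gives `fderiv`. -/
lemma fderiv_eq_of_line (f : (Fin 6 → ℝ) → ℝ) (y v : Fin 6 → ℝ) (c : ℝ)
    (hf : DifferentiableAt ℝ f y) (h : HasDerivAt (fun t : ℝ => f (fun k => y k + t * v k)) c 0) :
    fderiv ℝ f y v = c := by
  have hc : HasDerivAt (fun t : ℝ => (fun k => y k + t * v k : Fin 6 → ℝ)) v 0 := by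
    rw [hasDerivAt_pi]
    intro k
    simpa using ((hasDerivAt_id (0 : ℝ)).mul_const (v k)).const_add (y k)
  have hy : (fun k => y k + (0 : ℝ) * v k : Fin 6 → ℝ) = y := by
    funext k; simp
  have hf' : HasFDerivAt f (fderiv ℝ f y) (fun k => y k + (0 : ℝ) * v k) := by
    rw [hy]; exact hf.hasFDerivAt
  exact (hf'.comp_hasDerivAt (0 : ℝ) hc).unique h

lemma line_coord (y v : Fin 6 → ℝ) (k : Fin 6) :
    HasDerivAt (fun t : ℝ => y k + t * v k) (v k) 0 := by
  simpa using ((hasDerivAt_id (0 : ℝ)).mul_const (v k)).const_add (y k)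

/-- derivative of `1/((a-b)(a-c))` times `n`. -/
def quotD (n a b c dn da db dc : ℝ) : ℝ :=
  dn / ((a - b) * (a - c))
    - n * ((da - db) * (a - c) + (a - b) * (da - dc)) / ((a - b) * (a - c)) ^ 2

lemma hasDerivAt_quot {n a b c : ℝ → ℝ} {dn da db dc : ℝ}
    (hn : HasDerivAt n dn 0) (ha : HasDerivAt a da 0) (hb : HasDerivAt b db 0)
    (hc : HasDerivAt c dc 0) (hab : a 0 ≠ b 0) (hac : a 0 ≠ c 0) :
    HasDerivAt (fun t => n t / ((a t - b t) * (a t - c t)))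
      (quotD (n 0) (a 0) (b 0) (c 0) dn da db dc) 0 := by
  have h1 := sub_ne_zero.mpr hab
  have h2 := sub_ne_zero.mpr hac
  refine HasDerivAt.congr_deriv (hn.fun_div ((ha.fun_sub hb).fun_mul (ha.fun_sub hc)) (mul_ne_zero h1 h2)) ?_
  unfold quotD
  field_simp

/-- the directional derivative of `Phi` at `y` along `v`. -/
def DPhi (y v : Fin 6 → ℝ) : Fin 6 → ℝ :=
  ![-(1/2) * (v 0 + v 1 + v 2),
    -(1/4) * (y 0 + y 1 + y 2) * (v 0 + v 1 + v 2)
      + (1/2) * (v 0 * y 1 + y 0 * v 1 + (v 0 * y 2 + y 0 * v 2) + (v 1 * y 2 + y 1 * v 2)),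
    ((v 0 * y 1 + y 0 * v 1) * y 2 + y 0 * y 1 * v 2) / (2 * Real.sqrt (y 0 * y 1 * y 2)),
    quotD (y 0 * y 3 * (-y 0 + y 1 + y 2)) (y 0) (y 1) (y 2)
        ((v 0 * y 3 + y 0 * v 3) * (-y 0 + y 1 + y 2) + y 0 * y 3 * (-v 0 + v 1 + v 2))
        (v 0) (v 1) (v 2)
      + quotD (y 1 * y 4 * (y 0 - y 1 + y 2)) (y 1) (y 0) (y 2)
        ((v 1 * y 4 + y 1 * v 4) * (y 0 - y 1 + y 2) + y 1 * y 4 * (v 0 - v 1 + v 2))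
        (v 1) (v 0) (v 2)
      + quotD (y 2 * y 5 * (y 0 + y 1 - y 2)) (y 2) (y 0) (y 1)
        ((v 2 * y 5 + y 2 * v 5) * (y 0 + y 1 - y 2) + y 2 * y 5 * (v 0 + v 1 - v 2))
        (v 2) (v 0) (v 1),
    -2 * (quotD (y 0 * y 3) (y 0) (y 1) (y 2) (v 0 * y 3 + y 0 * v 3) (v 0) (v 1) (v 2)
      + quotD (y 1 * y 4) (y 1) (y 0) (y 2) (v 1 * y 4 + y 1 * v 4) (v 1) (v 0) (v 2)
      + quotD (y 2 * y 5) (y 2) (y 0) (y 1) (v 2 * y 5 + y 2 * v 5) (v 2) (v 0) (v 1)),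
    2 * (((v 0 * y 1 + y 0 * v 1) * y 2 + y 0 * y 1 * v 2) / (2 * Real.sqrt (y 0 * y 1 * y 2))) *
        (y 3 / ((y 0 - y 1) * (y 0 - y 2)) + y 4 / ((y 1 - y 0) * (y 1 - y 2))
          + y 5 / ((y 2 - y 0) * (y 2 - y 1)))
      + 2 * Real.sqrt (y 0 * y 1 * y 2) *
        (quotD (y 3) (y 0) (y 1) (y 2) (v 3) (v 0) (v 1) (v 2)
          + quotD (y 4) (y 1) (y 0) (y 2) (v 4) (v 1) (v 0) (v 2)
          + quotD (y 5) (y 2) (y 0) (y 1) (v 5) (v 2) (v 0) (v 1))]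

lemma Phi_differentiable (y : Fin 6 → ℝ)
    (h12 : y 0 ≠ y 1) (h13 : y 0 ≠ y 2) (h23 : y 1 ≠ y 2)
    (hpos : 0 < y 0 * y 1 * y 2) (i : Fin 6) :
    DifferentiableAt ℝ (fun z => Phi z i) y := by
  have a1 := mul_ne_zero (sub_ne_zero.mpr h12) (sub_ne_zero.mpr h13)
  have a2 := mul_ne_zero (sub_ne_zero.mpr h12.symm) (sub_ne_zero.mpr h23)
  have a3 := mul_ne_zero (sub_ne_zero.mpr h13.symm) (sub_ne_zero.mpr h23.symm)
  have a4 := hpos.ne'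
  fin_cases i <;> simp only [Phi, Fin.isValue, Fin.zero_eta, Fin.mk_one, Fin.reduceFinMk,
    Matrix.cons_val] <;> fun_prop (disch := assumption)

lemma Phi_line (y v : Fin 6 → ℝ)
    (h12 : y 0 ≠ y 1) (h13 : y 0 ≠ y 2) (h23 : y 1 ≠ y 2)
    (hpos : 0 < y 0 * y 1 * y 2) (i : Fin 6) :
    HasDerivAt (fun t : ℝ => Phi (fun k => y k + t * v k) i) (DPhi y v i) 0 := by
  have e := line_coord y v
  have S : HasDerivAt (fun t : ℝ => Real.sqrt
      ((y 0 + t * v 0) * (y 1 + t * v 1) * (y 2 + t * v 2)))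
      (((v 0 * y 1 + y 0 * v 1) * y 2 + y 0 * y 1 * v 2) / (2 * Real.sqrt (y 0 * y 1 * y 2))) 0 := by
    refine HasDerivAt.congr_deriv ((((e 0).fun_mul (e 1)).fun_mul (e 2)).sqrt (by simpa using hpos.ne')) ?_
    simp
  have Q {n : ℝ → ℝ} {dn : ℝ} (a b c : Fin 6) (hn : HasDerivAt n dn 0)
      (hab : y a ≠ y b) (hac : y a ≠ y c) :=
    hasDerivAt_quot hn (e a) (e b) (e c) (by simpa using hab) (by simpa using hac)
  fin_cases i <;> simp only [Phi, DPhi, Fin.isValue, Fin.zero_eta, Fin.mk_one, Fin.reduceFinMk,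
    Matrix.cons_val]
  · exact (((e 0).fun_add (e 1)).fun_add (e 2)).const_mul _
  · refine HasDerivAt.congr_deriv ((((((e 0).fun_add (e 1)).fun_add (e 2)).fun_pow 2).const_mul (-(1/8) : ℝ)).fun_add
      (((((e 0).fun_mul (e 1)).fun_add ((e 0).fun_mul (e 2))).fun_add
        ((e 1).fun_mul (e 2))).const_mul (1/2 : ℝ))) ?_
    simp
    ring
  · exact S
  · refine HasDerivAt.congr_deriv (((Q 0 1 2 (((e 0).fun_mul (e 3)).fun_mul (((e 0).fun_neg.fun_add (e 1)).fun_add (e 2)))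
      h12 h13).fun_add
      (Q 1 0 2 (((e 1).fun_mul (e 4)).fun_mul (((e 0).fun_sub (e 1)).fun_add (e 2)))
      h12.symm h23)).fun_add
      (Q 2 0 1 (((e 2).fun_mul (e 5)).fun_mul (((e 0).fun_add (e 1)).fun_sub (e 2)))
      h13.symm h23.symm)) ?_
    simp
  · refine HasDerivAt.congr_deriv ((((Q 0 1 2 ((e 0).fun_mul (e 3)) h12 h13).fun_add
      (Q 1 0 2 ((e 1).fun_mul (e 4)) h12.symm h23)).fun_add
      (Q 2 0 1 ((e 2).fun_mul (e 5)) h13.symm h23.symm)).const_mul (-2 : ℝ)) ?_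
    simp
  · refine HasDerivAt.congr_deriv ((S.const_mul 2).fun_mul (((Q 0 1 2 (e 3) h12 h13).fun_add
      (Q 1 0 2 (e 4) h12.symm h23)).fun_add (Q 2 0 1 (e 5) h13.symm h23.symm))) ?_
    simp

lemma JacPhi_eq (y : Fin 6 → ℝ)
    (h12 : y 0 ≠ y 1) (h13 : y 0 ≠ y 2) (h23 : y 1 ≠ y 2)
    (hpos : 0 < y 0 * y 1 * y 2) (i j : Fin 6) :
    JacPhi y i j = DPhi y (Pi.single j 1) i :=
  fderiv_eq_of_line _ _ _ _ (Phi_differentiable y h12 h13 h23 hpos i)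
    (Phi_line y _ h12 h13 h23 hpos i)

/-- the canonical symplectic form. -/
def om (u w : Fin 6 → ℝ) : ℝ :=
  u 0 * w 3 + u 1 * w 4 + u 2 * w 5 - u 3 * w 0 - u 4 * w 1 - u 5 * w 2

lemma om_swap (u w : Fin 6 → ℝ) : om u w = - om w u := by
  unfold om; ring

lemma entry_om (M : Matrix (Fin 6) (Fin 6) ℝ) (i j : Fin 6) :
    (Mᵀ * Jcan * M) i j = om (fun k => M k i) (fun k => M k j) := by
  simp [Matrix.mul_apply, Fin.sum_univ_succ, Jcan, om]
  ring

set_option maxHeartbeats 4000000 in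
lemma om_DPhi (y : Fin 6 → ℝ)
    (h12 : y 0 ≠ y 1) (h13 : y 0 ≠ y 2) (h23 : y 1 ≠ y 2)
    (hpos : 0 < y 0 * y 1 * y 2) (i j : Fin 6) (hij : i < j) :
    om (DPhi y (Pi.single i 1)) (DPhi y (Pi.single j 1)) = Jcan i j := by
  have b1 := sub_ne_zero.mpr h12
  have b2 := sub_ne_zero.mpr h13
  have b3 := sub_ne_zero.mpr h23
  have c1 : y 1 - y 0 = -(y 0 - y 1) := by ring
  have c2 : y 2 - y 0 = -(y 0 - y 2) := by ring
  have c3 : y 2 - y 1 = -(y 1 - y 2) := by ring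
  have hs : Real.sqrt (y 0 * y 1 * y 2) ≠ 0 := (Real.sqrt_pos.mpr hpos).ne'
  have hs2 : Real.sqrt (y 0 * y 1 * y 2) ^ 2 = y 0 * y 1 * y 2 := Real.sq_sqrt hpos.le
  fin_cases i <;> fin_cases j <;> first
    | (exfalso; revert hij; decide)
    | (clear hij
       simp only [om, DPhi, quotD, Jcan, Matrix.cons_val, Matrix.of_apply, Fin.isValue,
         Fin.zero_eta, Fin.mk_one, Fin.reduceFinMk, Pi.single_apply, Fin.reduceEq, if_true, if_false]
       rw [c1, c2, c3]
       generalize Real.sqrt (y 0 * y 1 * y 2) = s at hs hs2 ⊢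
       field_simp
       ring_nf
       try simp only [hs2]
       try ring)

theorem henon_heiles_3dof_Phi_canonical
    (y : Fin 6 → ℝ)
    (h12 : y 0 ≠ y 1) (h13 : y 0 ≠ y 2) (h23 : y 1 ≠ y 2)
    (hpos : 0 < y 0 * y 1 * y 2) :
    (JacPhi y)ᵀ * Jcan * JacPhi y = Jcan := by
  ext i j
  rw [entry_om]
  simp only [JacPhi_eq y h12 h13 h23 hpos]
  rcases lt_trichotomy i j with h | h | h
  · exact om_DPhi y h12 h13 h23 hpos i j h
  · subst h
    have h0 : Jcan i i = 0 := by
      fin_cases i <;> simp [Jcan]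
    rw [h0]; unfold om; ring
  · have h0 : Jcan i j = - Jcan j i := by
      fin_cases i <;> fin_cases j <;> simp [Jcan]
    rw [h0, om_swap]
    exact congrArg Neg.neg (om_DPhi y h12 h13 h23 hpos j i h)

end
end

section
/- The Poisson structures P0 and P1 of the four-degrees-of-freedom Hénon–Heiles type system are compatible: the bracket defined by the sum P0 + P1, namely {f,g}(x) = ∇f(x)ᵀ (P0 + P1(x)) ∇g(x), satisfies the Jacobi identity {f,{g,h}} + {g,{h,f}} + {h,{f,g}} = 0 for all smooth functions f,g,h on ℝ⁸. -/
/- STATEMENT 10: The Poisson structures P0 and P1 of the 4-dof Hénon–Heiles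
type system are compatible: the bracket of P0 + P1 satisfies the Jacobi
identity. -/

noncomputable section

open Matrix

/-- partial derivative of `f` at `x` in the `i`-th coordinate direction,
coordinates ordered as `(q1,q2,q3,q4,p1,p2,p3,p4)`. -/
def pd (i : Fin 8) (f : (Fin 8 → ℝ) → ℝ) (x : Fin 8 → ℝ) : ℝ :=
  fderiv ℝ f x (Pi.single i 1)

/-- the gradient of `f` at `x`. -/
def grad (f : (Fin 8 → ℝ) → ℝ) (x : Fin 8 → ℝ) : Fin 8 → ℝ :=
  fun i => pd i f x

/-- the canonical matrix `P0 = [[0, I],[−I, 0]]`. -/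
def P0 : Matrix (Fin 8) (Fin 8) ℝ :=
  !![0, 0, 0, 0, 1, 0, 0, 0;
     0, 0, 0, 0, 0, 1, 0, 0;
     0, 0, 0, 0, 0, 0, 1, 0;
     0, 0, 0, 0, 0, 0, 0, 1;
     -1, 0, 0, 0, 0, 0, 0, 0;
     0, -1, 0, 0, 0, 0, 0, 0;
     0, 0, -1, 0, 0, 0, 0, 0;
     0, 0, 0, -1, 0, 0, 0, 0]

/-- The matrix `P1 = [[0, A],[−Aᵀ, B]]` with
`A = −[[q1,−1,0,0],[q2,0,−1,0],[2q3,q2,q1,q4],[q4,0,0,0]]` and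
`B = [[0,−p2,−p3,−p4],[p2,0,0,0],[p3,0,0,0],[p4,0,0,0]]`. -/
def P1 (x : Fin 8 → ℝ) : Matrix (Fin 8) (Fin 8) ℝ :=
  !![0, 0, 0, 0, -(x 0), 1, 0, 0;
     0, 0, 0, 0, -(x 1), 0, 1, 0;
     0, 0, 0, 0, -(2 * x 2), -(x 1), -(x 0), -(x 3);
     0, 0, 0, 0, -(x 3), 0, 0, 0;
     x 0, x 1, 2 * x 2, x 3, 0, -(x 5), -(x 6), -(x 7);
     -1, 0, x 1, 0, x 5, 0, 0, 0;
     0, -1, x 0, 0, x 6, 0, 0, 0;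
     0, 0, x 3, 0, x 7, 0, 0, 0]

/-- the bracket `{f,g}(x) = ∇f(x)ᵀ (P0 + P1(x)) ∇g(x)`. -/
def pbSum (f g : (Fin 8 → ℝ) → ℝ) (x : Fin 8 → ℝ) : ℝ :=
  grad f x ⬝ᵥ (P0 + P1 x).mulVec (grad g x)

/-- the full Poisson matrix -/
def MM (x : Fin 8 → ℝ) : Matrix (Fin 8) (Fin 8) ℝ := P0 + P1 x

/-- the linear part of `P1` -/
def LL (w : Fin 8 → ℝ) : Matrix (Fin 8) (Fin 8) ℝ := P1 w - P1 0

lemma MM_line (x w : Fin 8 → ℝ) (t : ℝ) (i j : Fin 8) :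
    MM (x + t • w) i j = MM x i j + t * LL w i j := by
  fin_cases i <;> fin_cases j <;> simp [MM, LL, P1] <;> ring

lemma MM_diff (i j : Fin 8) : Differentiable ℝ (fun x => MM x i j) := by
  fin_cases i <;> fin_cases j <;> simp [MM, P1] <;> fun_prop

lemma MM_skew (x : Fin 8 → ℝ) : (MM x)ᵀ = - MM x := by
  ext i j
  fin_cases i <;> fin_cases j <;> simp [MM, P1, P0] <;> ring

lemma fderiv_eq_sum (G : (Fin 8 → ℝ) → ℝ) (x w : Fin 8 → ℝ) :
    fderiv ℝ G x w = ∑ l, w l * pd l G x := by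
  conv_lhs => rw [pi_eq_sum_univ' w]
  simp [pd, map_sum]

lemma pbSum_eq (f G : (Fin 8 → ℝ) → ℝ) (x : Fin 8 → ℝ) :
    pbSum f G x = fderiv ℝ G x (grad f x ᵥ* MM x) := by
  rw [fderiv_eq_sum, pbSum, Matrix.dotProduct_mulVec]
  rfl

lemma pbSum_sum (g h : (Fin 8 → ℝ) → ℝ) (x : Fin 8 → ℝ) :
    pbSum g h x = ∑ i, ∑ j, pd i g x * (MM x i j * pd j h x) := by
  simp only [pbSum, dotProduct, mulVec, Finset.mul_sum]
  rfl

lemma two_le_smooth' : (2 : WithTop ℕ∞) ≤ ((⊤ : ℕ∞) : WithTop ℕ∞) :=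
  WithTop.coe_le_coe.2 (le_top : (2 : ℕ∞) ≤ ⊤)

lemma two_le_smooth : (1 + 1 : WithTop ℕ∞) ≤ ((⊤ : ℕ∞) : WithTop ℕ∞) := by
  rw [one_add_one_eq_two]
  exact two_le_smooth'

lemma grad_diff {g : (Fin 8 → ℝ) → ℝ} (hg : ContDiff ℝ (⊤ : ℕ∞) g) :
    Differentiable ℝ (fderiv ℝ g) :=
  (hg.fderiv_right (m := 1) two_le_smooth).differentiable (by norm_num)

lemma pd_diff {g : (Fin 8 → ℝ) → ℝ} (hg : ContDiff ℝ (⊤ : ℕ∞) g) (i : Fin 8) :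
    Differentiable ℝ (pd i g) := by
  have := grad_diff hg
  unfold pd
  fun_prop

lemma pd_fderiv {g : (Fin 8 → ℝ) → ℝ} (hg : ContDiff ℝ (⊤ : ℕ∞) g) (i : Fin 8)
    (x w : Fin 8 → ℝ) :
    fderiv ℝ (pd i g) x w = fderiv ℝ (fderiv ℝ g) x w (Pi.single i 1) := by
  have h := ((grad_diff hg x).hasFDerivAt.clm_apply
    (hasFDerivAt_const (Pi.single i (1:ℝ) : Fin 8 → ℝ) x)).fderiv
  unfold pd
  rw [h]
  simp

lemma MM_fderiv (i j : Fin 8) (x w : Fin 8 → ℝ) :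
    fderiv ℝ (fun x => MM x i j) x w = LL w i j := by
  rw [← ((MM_diff i j) x).lineDeriv_eq_fderiv, lineDeriv]
  simp only [MM_line]
  simp

lemma clm_sum (T : (Fin 8 → ℝ) →L[ℝ] ℝ) (w : Fin 8 → ℝ) :
    T w = ∑ l, w l * T (Pi.single l 1) := by
  conv_lhs => rw [pi_eq_sum_univ' w]
  simp [map_sum]

lemma pbSum_fderiv {g h : (Fin 8 → ℝ) → ℝ} (hg : ContDiff ℝ (⊤ : ℕ∞) g)
    (hh : ContDiff ℝ (⊤ : ℕ∞) h) (x w : Fin 8 → ℝ) :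
    fderiv ℝ (pbSum g h) x w =
      - fderiv ℝ (fderiv ℝ g) x w (grad h x ᵥ* MM x)
      + fderiv ℝ (fderiv ℝ h) x w (grad g x ᵥ* MM x)
      + grad g x ⬝ᵥ (LL w *ᵥ grad h x) := by
  have e : pbSum g h = fun x => ∑ i, ∑ j, pd i g x * (MM x i j * pd j h x) :=
    funext (pbSum_sum g h)
  have key := HasFDerivAt.fun_sum (u := Finset.univ) fun i (_ : i ∈ Finset.univ) =>
    HasFDerivAt.fun_sum (u := Finset.univ) fun j (_ : j ∈ Finset.univ) =>
      ((pd_diff hg i) x).hasFDerivAt.mul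
        (((MM_diff i j) x).hasFDerivAt.mul ((pd_diff hh j) x).hasFDerivAt)
  have hs : grad h x ᵥ* MM x = - (MM x *ᵥ grad h x) := by
    rw [← Matrix.mulVec_transpose, MM_skew, Matrix.neg_mulVec]
  rw [e]
  erw [key.fderiv]
  rw [hs, map_neg, neg_neg, clm_sum _ (MM x *ᵥ grad h x),
    clm_sum _ (grad g x ᵥ* MM x)]
  simp only [_root_.sum_apply, _root_.add_apply,
    _root_.smul_apply, smul_eq_mul, pd_fderiv hg, pd_fderiv hh, MM_fderiv,
    dotProduct, mulVec, vecMul, Finset.mul_sum, Finset.sum_mul]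
  rw [Finset.sum_comm (f := fun l i => grad g x i * MM x i l * _)]
  simp only [← Finset.sum_add_distrib]
  refine Finset.sum_congr rfl fun i _ => Finset.sum_congr rfl fun j _ => ?_
  simp only [grad, Pi.mul_apply]
  ring

set_option maxHeartbeats 4000000 in
lemma cyc (x u v w : Fin 8 → ℝ) :
    v ⬝ᵥ (LL (u ᵥ* MM x) *ᵥ w) + w ⬝ᵥ (LL (v ᵥ* MM x) *ᵥ u)
      + u ⬝ᵥ (LL (w ᵥ* MM x) *ᵥ v) = 0 := by
  simp [LL, MM, P0, P1, dotProduct, mulVec, vecMul, Fin.sum_univ_eight]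
  ring

lemma hess_symm {g : (Fin 8 → ℝ) → ℝ} (hg : ContDiff ℝ (⊤ : ℕ∞) g) (x u v : Fin 8 → ℝ) :
    fderiv ℝ (fderiv ℝ g) x u v = fderiv ℝ (fderiv ℝ g) x v u := by
  have : IsSymmSndFDerivAt ℝ g x :=
    hg.contDiffAt.isSymmSndFDerivAt (by simpa using two_le_smooth')
  exact this u v

theorem henon_heiles_4dof_P0_P1_compatible :
    ∀ f g h : (Fin 8 → ℝ) → ℝ, ContDiff ℝ (⊤ : ℕ∞) f → ContDiff ℝ (⊤ : ℕ∞) g → ContDiff ℝ (⊤ : ℕ∞) h →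
      ∀ x : Fin 8 → ℝ,
        pbSum f (pbSum g h) x + pbSum g (pbSum h f) x + pbSum h (pbSum f g) x = 0 := by
  intro f g h hf hg hh x
  rw [pbSum_eq f, pbSum_eq g, pbSum_eq h, pbSum_fderiv hg hh, pbSum_fderiv hh hf,
    pbSum_fderiv hf hg]
  have := cyc x (grad f x) (grad g x) (grad h x)
  rw [hess_symm hf x (grad g x ᵥ* MM x), hess_symm hg x (grad f x ᵥ* MM x),
    hess_symm hh x (grad f x ᵥ* MM x)]
  linarith

end
end
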